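/- arXiv:1507.04200 — 4 statements merged into one kernel-verified Lean document; each statement's English description precedes it below -/
import Mathlib

section
/- Let ε > 0, 0 ≤ κ < 1, and set λ = ε^{3/2} κ. Suppose v, r, β are real-valued functions on a neighborhood of 0 in ℝ with v > 0, v − λ/√v > 0, and r > 0 on this neighborhood, satisfying the differential equations v'(s) = r(s) cos β(s) / (v(s) + λ/(2 √(v(s)))), r'(s) = cos β(s), and β'(s) = −2/(v(s) − λ/√(v(s))) − (r(s)²/(v(s)² − λ √(v(s))) + 1) · sin β(s) / r(s) for all s in the neighborhood, with initial values v(0) = ε, r(0) = 1, β(0) = 0. Then v is twice differentiable at 0 and v''(0) = (ε²(1 + κ/2)² + κ/4 − 1) / (ε³ (1 + κ/2)³). -/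
/-!
Write `g v = v + λ / (2 √v)`, the derivative of the energy `v² / 2 + λ √v`. The velocity equation
`g(v) v' = r cos β` differentiates to `g(v) v'' + g'(v) v'² = cos² β - r β' sin β`, whose right-hand
side is `1` at the nozzle whatever the value of `β'(0)`. There `g(ε) = ε (1 + κ / 2)` and
`g'(ε) = 1 - κ / 4`.
-/

open scoped Topology

theorem hasDerivAt_deriv_of_eventually_hasDerivAt_div {𝕜 : Type*} [NontriviallyNormedField 𝕜]
    {v f g : 𝕜 → 𝕜} {s f' g' : 𝕜} (hv : ∀ᶠ t in 𝓝 s, HasDerivAt v (f t / g (v t)) t)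
    (hf : HasDerivAt f f' s) (hg : HasDerivAt g g' (v s)) (hgs : g (v s) ≠ 0) :
    HasDerivAt (deriv v) ((f' - g' * (f s / g (v s)) ^ 2) / g (v s)) s := by
  have hquot : HasDerivAt (fun t ↦ f t / g (v t)) _ s :=
    hf.fun_div (hg.comp s hv.self_of_nhds) hgs
  have hderiv : deriv v =ᶠ[𝓝 s] fun t ↦ f t / g (v t) := hv.mono fun _ ht ↦ ht.deriv
  refine (hquot.congr_of_eventuallyEq hderiv).congr_deriv ?_
  field_simp

/-- The derivative `v + λ / (2 √v)` of the energy `v² / 2 + λ √v` of an inviscid fiber with respect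
to its velocity `v`, i.e. the coefficient of `v'` in the velocity equation. -/
noncomputable def fiberEnergyDeriv (lam v : ℝ) : ℝ :=
  v + lam / (2 * √v)

theorem hasDerivAt_fiberEnergyDeriv (lam : ℝ) {v : ℝ} (hv : 0 < v) :
    HasDerivAt (fiberEnergyDeriv lam) (1 - lam / (4 * √v ^ 3)) v := by
  have hsqrt : √v ≠ 0 := (Real.sqrt_pos.mpr hv).ne'
  have hcapillary : HasDerivAt (fun x ↦ lam / (2 * √x)) _ v :=
    (hasDerivAt_const v lam).fun_div ((Real.hasDerivAt_sqrt hv.ne').const_mul 2)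
      (mul_ne_zero two_ne_zero hsqrt)
  refine ((hasDerivAt_id v).fun_add hcapillary).congr_deriv ?_
  field_simp
  ring

theorem rpow_three_halves_eq_sqrt_pow {x : ℝ} (hx : 0 ≤ x) : x ^ ((3 : ℝ) / 2) = √x ^ 3 := by
  rw [Real.rpow_div_two_eq_sqrt _ hx]
  norm_cast

theorem fiberEnergyDeriv_rpow_three_halves_mul (κ : ℝ) {v : ℝ} (hv : 0 ≤ v) :
    fiberEnergyDeriv (v ^ ((3 : ℝ) / 2) * κ) v = v * (1 + κ / 2) :=
  calc v + v ^ ((3 : ℝ) / 2) * κ / (2 * √v)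
      = v + √v ^ 3 * κ / (2 * √v) := by rw [rpow_three_halves_eq_sqrt_pow hv]
    _ = v + √v ^ 2 * (κ / 2) := by field_simp
    _ = v * (1 + κ / 2) := by rw [Real.sq_sqrt hv]; ring

theorem hasDerivAt_fiberEnergyDeriv_rpow_three_halves_mul (κ : ℝ) {v : ℝ} (hv : 0 < v) :
    HasDerivAt (fiberEnergyDeriv (v ^ ((3 : ℝ) / 2) * κ)) (1 - κ / 4) v := by
  have hsqrt : √v ≠ 0 := (Real.sqrt_pos.mpr hv).ne'
  refine (hasDerivAt_fiberEnergyDeriv _ hv).congr_deriv ?_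
  rw [rpow_three_halves_eq_sqrt_pow hv.le]
  field_simp

theorem inviscid_second_deriv_at_nozzle_general {ε κ lam : ℝ} {v r β : ℝ → ℝ}
    (hε : 0 < ε) (hκ : κ ≠ -2) (hlam : lam = ε ^ ((3 : ℝ) / 2) * κ)
    (hv : ∀ᶠ s in 𝓝 (0 : ℝ), HasDerivAt v (r s * Real.cos (β s) / (v s + lam / (2 * √(v s)))) s)
    (hr : HasDerivAt r (Real.cos (β 0)) 0) (hβ : DifferentiableAt ℝ β 0)
    (hv0 : v 0 = ε) (hr0 : r 0 = 1) (hβ0 : β 0 = 0) :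
    HasDerivAt (deriv v)
      ((ε ^ 2 * (1 + κ / 2) ^ 2 + κ / 4 - 1) / (ε ^ 3 * (1 + κ / 2) ^ 3)) 0 := by
  subst hlam
  have hκ₂ : 2 + κ ≠ 0 := fun h ↦ hκ (by linarith)
  have hforce : HasDerivAt (fun s ↦ r s * Real.cos (β s)) 1 0 := by
    simpa [hβ0] using hr.fun_mul hβ.hasDerivAt.cos
  have hinertia : fiberEnergyDeriv (ε ^ ((3 : ℝ) / 2) * κ) (v 0) = ε * (1 + κ / 2) := by
    rw [hv0, fiberEnergyDeriv_rpow_three_halves_mul κ hε.le]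
  have hinertia' : HasDerivAt (fiberEnergyDeriv (ε ^ ((3 : ℝ) / 2) * κ)) (1 - κ / 4) (v 0) := by
    rw [hv0]
    exact hasDerivAt_fiberEnergyDeriv_rpow_three_halves_mul κ hε
  refine (hasDerivAt_deriv_of_eventually_hasDerivAt_div hv hforce hinertia' ?_).congr_deriv ?_
  · rw [hinertia]
    exact mul_ne_zero hε.ne' fun h ↦ hκ (by linarith)
  · rw [hinertia, hr0, hβ0, Real.cos_zero]
    field_simp
    ring

/-- Proof of Lemma 3.3: value of `v''(0)` for the reduced inviscid
stationary fiber spinning system in rescaled Eulerian variables. -/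
theorem inviscid_second_deriv_at_nozzle
    (ε κ : ℝ) (hε : 0 < ε) (hκ0 : 0 ≤ κ) (hκ1 : κ < 1)
    (lam : ℝ) (hlam : lam = ε ^ ((3 : ℝ) / 2) * κ)
    (v r β : ℝ → ℝ)
    (hpos : ∀ᶠ s in nhds (0 : ℝ),
      0 < v s ∧ 0 < v s - lam / Real.sqrt (v s) ∧ 0 < r s)
    (hv : ∀ᶠ s in nhds (0 : ℝ),
      HasDerivAt v (r s * Real.cos (β s) / (v s + lam / (2 * Real.sqrt (v s)))) s)
    (hr : ∀ᶠ s in nhds (0 : ℝ), HasDerivAt r (Real.cos (β s)) s)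
    (hβ : ∀ᶠ s in nhds (0 : ℝ),
      HasDerivAt β (-(2 / (v s - lam / Real.sqrt (v s)))
        - ((r s) ^ 2 / ((v s) ^ 2 - lam * Real.sqrt (v s)) + 1)
          * Real.sin (β s) / r s) s)
    (hv0 : v 0 = ε) (hr0 : r 0 = 1) (hβ0 : β 0 = 0) :
    HasDerivAt (deriv v)
      ((ε ^ 2 * (1 + κ / 2) ^ 2 + κ / 4 - 1) / (ε ^ 3 * (1 + κ / 2) ^ 3)) 0 := by
  exact inviscid_second_deriv_at_nozzle_general hε (by linarith) hlam hv hr.self_of_nhds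
    hβ.self_of_nhds.differentiableAt hv0 hr0 hβ0
end

section
/- Let ε > 0 and 0 ≤ κ < 1. Suppose u, r, β are real-valued functions on a neighborhood of 0 in ℝ with u > 0, r > 0, and u − κ/√u > 0 on this neighborhood, satisfying for all t in the neighborhood: ε² u'(t) (1 + κ/(2 u(t)^{3/2})) = r(t) cos β(t), r'(t) = u(t) cos β(t), and β'(t) = −2 u(t)/(ε (u(t) − κ/√(u(t)))) − (r(t)²/(ε² (u(t) − κ/√(u(t)))) + u(t)) · sin β(t)/r(t), with initial values u(0) = 1, r(0) = 1, β(0) = 0. Then u is twice differentiable at 0 and u''(0) = (1/(1 + κ/2)³) · ((1 + κ/2)²/ε² + 3κ/(4 ε⁴)), and in particular u''(0) > 0. -/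
/-!
Dividing the momentum equation `ε² c(u) u' = r cos β`, where `c(u) = dq/du` for `q = u - κ / √u`, by
its nonvanishing coefficient shows that `u'` is differentiable, and differentiating it gives
`ε² (c(u) u'' + c'(u) u'²) = (r cos β)'`. At the nozzle `cos` is stationary, so the rate of change
of `β` drops out and the right-hand side is just `r' = 1`; convexity comes from `c' ≤ 0`.
-/

open scoped Topology

/-- The derivative `dq/du` of the paper's `q = u - κ / √u` at `u = v`, which multiplies the
acceleration in the momentum equation. It has this meaning only for `v > 0`. -/
noncomputable def inertiaFactor (κ v : ℝ) : ℝ :=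
  1 + κ / (2 * v ^ ((3 : ℝ) / 2))

theorem inertiaFactor_one (κ : ℝ) : inertiaFactor κ 1 = 1 + κ / 2 := by
  simp [inertiaFactor]

theorem hasDerivAt_inertiaFactor (κ : ℝ) {v : ℝ} (hv : 0 < v) :
    HasDerivAt (inertiaFactor κ) (-(3 * κ / (4 * v ^ ((5 : ℝ) / 2)))) v := by
  have hfactor : inertiaFactor κ =ᶠ[𝓝 v] fun w => 1 + κ / 2 * w ^ (-(3 / 2) : ℝ) := by
    filter_upwards [lt_mem_nhds hv] with w hw
    rw [inertiaFactor, Real.rpow_neg hw.le]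
    ring
  have hpow := Real.hasDerivAt_rpow_const (p := -(3 / 2)) (Or.inl hv.ne')
  refine (((hpow.const_mul (κ / 2)).const_add 1).congr_of_eventuallyEq hfactor).congr_deriv ?_
  rw [show (-(3 / 2) - 1 : ℝ) = -(5 / 2) by norm_num, Real.rpow_neg hv.le]
  ring

theorem hasDerivAt_deriv_of_eventually_mul_deriv_eq {𝕜 : Type*} [NontriviallyNormedField 𝕜]
    {u f g : 𝕜 → 𝕜} {a f' g' : 𝕜} (hu : DifferentiableAt 𝕜 u a)
    (hg : HasDerivAt g g' (u a)) (hg_ne : g (u a) ≠ 0) (hf : HasDerivAt f f' a)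
    (h : ∀ᶠ t in 𝓝 a, g (u t) * deriv u t = f t) :
    HasDerivAt (deriv u) ((f' - g' * deriv u a ^ 2) / g (u a)) a := by
  have hgu : HasDerivAt (fun t => g (u t)) (g' * deriv u a) a := hg.comp a hu.hasDerivAt
  have hderiv : deriv u =ᶠ[𝓝 a] fun t => f t / g (u t) := by
    filter_upwards [h, hgu.continuousAt.eventually_ne hg_ne] with t ht hgt
    exact eq_div_of_mul_eq hgt (by rw [mul_comm, ht])
  refine ((hf.fun_div hgu hg_ne).congr_of_eventuallyEq hderiv).congr_deriv ?_
  rw [← h.self_of_nhds]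
  field_simp

theorem hasDerivAt_deriv_of_momentum_eq {ε κ a force' : ℝ} {u force : ℝ → ℝ} (hε : ε ≠ 0)
    (hu_pos : 0 < u a) (hinertia : inertiaFactor κ (u a) ≠ 0) (hu : DifferentiableAt ℝ u a)
    (hforce : HasDerivAt force force' a)
    (hmomentum : ∀ᶠ t in 𝓝 a, ε ^ 2 * deriv u t * inertiaFactor κ (u t) = force t) :
    HasDerivAt (deriv u)
      ((force' + 3 * κ * ε ^ 2 * deriv u a ^ 2 / (4 * u a ^ ((5 : ℝ) / 2)))
        / (ε ^ 2 * inertiaFactor κ (u a))) a := by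
  have hcoeff := (hasDerivAt_inertiaFactor κ hu_pos).const_mul (ε ^ 2)
  refine (hasDerivAt_deriv_of_eventually_mul_deriv_eq hu hcoeff
    (mul_ne_zero (pow_ne_zero 2 hε) hinertia) hforce ?_).congr_deriv (by ring)
  filter_upwards [hmomentum] with t ht
  rw [← ht, mul_right_comm]

theorem lagrangian_velocity_convex_at_nozzle_general
    {ε κ : ℝ} (hε : ε ≠ 0) (hκ : 0 ≤ κ) {u r β : ℝ → ℝ}
    (hud : DifferentiableAt ℝ u 0)
    (hu : ∀ᶠ t in 𝓝 (0 : ℝ),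
      ε ^ 2 * deriv u t * (1 + κ / (2 * u t ^ ((3 : ℝ) / 2))) = r t * Real.cos (β t))
    (hr : HasDerivAt r (u 0 * Real.cos (β 0)) 0) (hβ : DifferentiableAt ℝ β 0)
    (hu0 : u 0 = 1) (hr0 : r 0 = 1) (hβ0 : β 0 = 0) :
    HasDerivAt (deriv u)
      ((1 / (1 + κ / 2) ^ 3) * ((1 + κ / 2) ^ 2 / ε ^ 2 + 3 * κ / (4 * ε ^ 4))) 0
    ∧ 0 < (1 / (1 + κ / 2) ^ 3) * ((1 + κ / 2) ^ 2 / ε ^ 2 + 3 * κ / (4 * ε ^ 4)) := by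
  refine ⟨?_, by positivity⟩
  have hinertia : inertiaFactor κ (u 0) = 1 + κ / 2 := by rw [hu0, inertiaFactor_one]
  have hforce : HasDerivAt (fun t => r t * Real.cos (β t)) 1 0 := by
    simpa [hu0, hβ0] using hr.fun_mul hβ.hasDerivAt.cos
  have hu'0 : deriv u 0 = 1 / (ε ^ 2 * (1 + κ / 2)) := by
    have hmomentum0 : ε ^ 2 * deriv u 0 * inertiaFactor κ (u 0) = r 0 * Real.cos (β 0) :=
      hu.self_of_nhds
    rw [hinertia, hr0, hβ0, Real.cos_zero, mul_one, mul_right_comm] at hmomentum0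
    exact eq_one_div_of_mul_eq_one_right hmomentum0
  have hu'' := hasDerivAt_deriv_of_momentum_eq hε (hu0 ▸ one_pos)
    (by rw [hinertia]; positivity) hud hforce hu
  rw [hinertia, hu'0, hu0, Real.one_rpow] at hu''
  refine hu''.congr_deriv ?_
  field_simp

/-- Lemma 3.4: in the inviscid Lagrangian fiber spinning system the velocity
is convex at the nozzle, with
`ü(0) = (1/(1+κ/2)³)((1+κ/2)²/ε² + 3κ/(4ε⁴)) > 0`. -/
theorem lagrangian_velocity_convex_at_nozzle
    (ε κ : ℝ) (hε : 0 < ε) (hκ0 : 0 ≤ κ) (hκ1 : κ < 1)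
    (u r β : ℝ → ℝ)
    (hpos : ∀ᶠ t in nhds (0 : ℝ),
      0 < u t ∧ 0 < r t ∧ 0 < u t - κ / Real.sqrt (u t))
    (hu : ∀ᶠ t in nhds (0 : ℝ),
      DifferentiableAt ℝ u t ∧
      ε ^ 2 * deriv u t * (1 + κ / (2 * u t ^ ((3 : ℝ) / 2)))
        = r t * Real.cos (β t))
    (hr : ∀ᶠ t in nhds (0 : ℝ), HasDerivAt r (u t * Real.cos (β t)) t)
    (hβ : ∀ᶠ t in nhds (0 : ℝ),
      HasDerivAt β (-(2 * u t / (ε * (u t - κ / Real.sqrt (u t))))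
        - ((r t) ^ 2 / (ε ^ 2 * (u t - κ / Real.sqrt (u t))) + u t)
          * Real.sin (β t) / r t) t)
    (hu0 : u 0 = 1) (hr0 : r 0 = 1) (hβ0 : β 0 = 0) :
    HasDerivAt (deriv u)
      ((1 / (1 + κ / 2) ^ 3) * ((1 + κ / 2) ^ 2 / ε ^ 2 + 3 * κ / (4 * ε ^ 4))) 0
    ∧ 0 < (1 / (1 + κ / 2) ^ 3) * ((1 + κ / 2) ^ 2 / ε ^ 2 + 3 * κ / (4 * ε ^ 4)) := by
  exact lagrangian_velocity_convex_at_nozzle_general hε.ne' hκ0 hu.self_of_nhds.1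
    (hu.mono fun _ h => h.2) hr.self_of_nhds hβ.self_of_nhds.differentiableAt hu0 hr0 hβ0
end

section
/- Let δ > 0, ε > 0, κ ∈ ℝ and q₀ ∈ ℝ with q₀ ≤ 1 − κ. If (1 − κ − q₀)(3 − (3/2)κ − 2 q₀) − δ/ε² ≥ 0, then q₀ ≤ (5 − (7/2)κ − √((1 + κ/2)² + 8 δ/ε²)) / 4. -/
/-!
Put `x = 2 (1 − κ − q₀)` and `y = 3 − (3/2) κ − 2 q₀`, so that (P3) reads `2 δ/ε² ≤ x y`. The
difference `y − x = 1 + κ/2` does not involve `q₀`, so `(x + y)² = (x − y)² + 4 x y` turns this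
bound on the product into a bound on the sum `x + y = 5 − (7/2) κ − 4 q₀`. Since `0 ≤ x` and
`0 < x y`, the sum is nonnegative, which selects the smaller root of the quadratic in `q₀`.
-/

theorem sqrt_sub_sq_add_four_mul_le_add_iff {x y d : ℝ} :
    √((x - y) ^ 2 + 4 * d) ≤ x + y ↔ 0 ≤ x + y ∧ d ≤ x * y := by
  have sum_sq : (x + y) ^ 2 = (x - y) ^ 2 + 4 * (x * y) := by ring
  rw [Real.sqrt_le_iff, sum_sq, add_le_add_iff_left, mul_le_mul_iff_right₀ four_pos]

/-- Upper bound of Theorem 4.2: property (P3), together with `q₀ ≤ 1 − κ`,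
yields `q₀ ≤ (5 − (7/2)κ − √((1 + κ/2)² + 8δ/ε²))/4`. -/
theorem q0_upper_bound
    (δ ε κ q₀ : ℝ) (hδ : 0 < δ) (hε : 0 < ε)
    (hq₁ : q₀ ≤ 1 - κ)
    (hP3 : 0 ≤ (1 - κ - q₀) * (3 - (3 / 2) * κ - 2 * q₀) - δ / ε ^ 2) :
    q₀ ≤ (5 - (7 / 2) * κ - Real.sqrt ((1 + κ / 2) ^ 2 + 8 * δ / ε ^ 2)) / 4 := by
  set x := 2 * (1 - κ - q₀) with hx
  set y := 3 - (3 / 2) * κ - 2 * q₀ with hy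
  have product_ge : 2 * (δ / ε ^ 2) ≤ x * y := by linarith
  have x_nonneg : 0 ≤ x := by linarith
  have y_pos : 0 < y := by
    have product_pos : 0 < x * y := lt_of_lt_of_le (by positivity) product_ge
    exact pos_of_mul_pos_right product_pos x_nonneg
  have sqrt_le : √((x - y) ^ 2 + 4 * (2 * (δ / ε ^ 2))) ≤ x + y :=
    sqrt_sub_sq_add_four_mul_le_add_iff.mpr ⟨by positivity, product_ge⟩
  have discriminant_eq :
      (x - y) ^ 2 + 4 * (2 * (δ / ε ^ 2)) = (1 + κ / 2) ^ 2 + 8 * δ / ε ^ 2 := by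
    rw [hx, hy]
    ring
  rw [discriminant_eq] at sqrt_le
  linarith
end

section
/- Let δ > 0, ε > 0 and κ ≥ 0 satisfy 3 (1 − (3/2)κ + κ²/2) ≤ δ/ε². Then there exists no real number q₀ satisfying simultaneously: (P1) 0 < q₀ ≤ 1 − κ, (P2) (2 − κ/2 − q₀)(1 − κ − q₀) − δ/ε² < 0, and (P3) (1 − κ − q₀)(3 − (3/2)κ − 2 q₀) − δ/ε² ≥ 0. -/
/-!
The threshold factors as `(1 - κ) * (3 - (3 / 2) * κ)`, which is the value at `q₀ = 0` of the
quadratic in (P3). On the range (P1) the quadratic stays strictly below that value: replacing `q₀`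
by `0` strictly increases the nonnegative first factor and raises the second to a positive number.
-/

theorem lagrangian_quadratic_lt_value_at_zero {κ q : ℝ} (hq : 0 < q) (hqκ : q ≤ 1 - κ) :
    (1 - κ - q) * (3 - (3 / 2) * κ - 2 * q) < (1 - κ) * (3 - (3 / 2) * κ) := by
  have first_factor_lt : 1 - κ - q < 1 - κ := sub_lt_self _ hq
  have second_factor_le : 3 - (3 / 2) * κ - 2 * q ≤ 3 - (3 / 2) * κ :=
    sub_le_self _ (by positivity)
  have first_factor_nonneg : 0 ≤ 1 - κ - q := sub_nonneg.mpr hqκ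
  have second_factor_at_zero_pos : 0 < 3 - (3 / 2) * κ := by linarith
  exact mul_lt_mul_of_lt_of_le_of_nonneg_of_pos first_factor_lt second_factor_le
    first_factor_nonneg second_factor_at_zero_pos

theorem nonexistence_physically_relevant_general {κ A : ℝ}
    (hcrit : 3 * (1 - (3 / 2) * κ + κ ^ 2 / 2) ≤ A) :
    ¬ ∃ q₀ : ℝ,
      (0 < q₀ ∧ q₀ ≤ 1 - κ) ∧
      (0 ≤ (1 - κ - q₀) * (3 - (3 / 2) * κ - 2 * q₀) - A) := by
  rintro ⟨q₀, ⟨hq₀, hq₀κ⟩, hP3⟩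
  refine (sub_nonneg.mp hP3).not_gt ?_
  calc (1 - κ - q₀) * (3 - (3 / 2) * κ - 2 * q₀)
      < (1 - κ) * (3 - (3 / 2) * κ) := lagrangian_quadratic_lt_value_at_zero hq₀ hq₀κ
    _ = 3 * (1 - (3 / 2) * κ + κ ^ 2 / 2) := by ring
    _ ≤ A := hcrit

/-- Corollary 4.3 (non-existence of physically relevant solutions):
if `3(1 − (3/2)κ + κ²/2) ≤ δ/ε²` then no `q₀` can satisfy (P1), (P2), (P3). -/
theorem nonexistence_physically_relevant
    (δ ε κ : ℝ) (hδ : 0 < δ) (hε : 0 < ε) (hκ0 : 0 ≤ κ)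
    (hcrit : 3 * (1 - (3 / 2) * κ + κ ^ 2 / 2) ≤ δ / ε ^ 2) :
    ¬ ∃ q₀ : ℝ,
      (0 < q₀ ∧ q₀ ≤ 1 - κ) ∧
      ((2 - κ / 2 - q₀) * (1 - κ - q₀) - δ / ε ^ 2 < 0) ∧
      (0 ≤ (1 - κ - q₀) * (3 - (3 / 2) * κ - 2 * q₀) - δ / ε ^ 2) := by
  rintro ⟨q₀, hP1, -, hP3⟩
  exact nonexistence_physically_relevant_general hcrit ⟨q₀, hP1, hP3⟩
end
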